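/- Let ψ be a Cartan–Hadamard model function with ∫₀^∞ Θ(s)^{1/(p−1)} ds = +∞ and such that either (a) there exist γ ∈ [0,1) and ℓ ∈ (0,∞) with lim_{r→∞} r^γ·ψ′(r)/ψ(r) = ℓ, or (b) lim_{r→∞} ψ′(r)/ψ(r) = +∞ and lim_{r→∞} (ψ(r)/ψ′(r))·(d/dr) log(ψ′(r)/ψ(r)) = 0. Let u be a global radial solution. Then lim_{r→∞} (u′(r)/u(r))·(ψ(r)/ψ′(r)) = 0. -/

import Mathlib

open Real Filter MeasureTheory
open scoped ENNReal Topology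

/-- The volume-to-surface ratio `Θ(r) = (∫₀ʳ ψ(s)^{n-1} ds) / ψ(r)^{n-1}`. -/
noncomputable def Theta (n : ℕ) (ψ : ℝ → ℝ) (r : ℝ) : ℝ :=
  (∫ s in (0:ℝ)..r, ψ s ^ (n - 1)) / ψ r ^ (n - 1)

/-- A Cartan–Hadamard model function: smooth, `ψ(0)=0`, `ψ'(0)=1`, convex on `[0,∞)`,
positive on `(0,∞)`. -/
def IsCHModel (ψ : ℝ → ℝ) : Prop :=
  ContDiff ℝ (⊤ : ℕ∞) ψ ∧ ψ 0 = 0 ∧ deriv ψ 0 = 1 ∧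
    (∀ r : ℝ, 0 ≤ r → 0 ≤ deriv (deriv ψ) r) ∧ (∀ r : ℝ, 0 < r → 0 < ψ r)

/-- A radial solution on `[0,T)` (with `T ∈ (0,∞]`) with initial datum `α`:
`u ∈ C¹([0,T))`, `u(0)=α`, `u'(0)=0`, `u>0` on `[0,T)`, and
`(ψ^{n-1} |u'|^{p-2} u')' = -ψ^{n-1} u^q` on `(0,T)`. -/
structure IsRadialSolution (n : ℕ) (p q : ℝ) (ψ : ℝ → ℝ) (T : ℝ≥0∞) (α : ℝ)
    (u : ℝ → ℝ) : Prop where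
  init : u 0 = α
  deriv_init : deriv u 0 = 0
  pos : ∀ r : ℝ, 0 ≤ r → ENNReal.ofReal r < T → 0 < u r
  diff : ∀ r : ℝ, 0 ≤ r → ENNReal.ofReal r < T → DifferentiableAt ℝ u r
  deriv_cont : ContinuousOn (deriv u) {r : ℝ | 0 ≤ r ∧ ENNReal.ofReal r < T}
  eqn : ∀ r : ℝ, 0 < r → ENNReal.ofReal r < T →
    HasDerivAt (fun s => ψ s ^ (n - 1) * |deriv u s| ^ (p - 2) * deriv u s)
      (-(ψ r ^ (n - 1) * u r ^ q)) r

/-- The energy function `F_u(r) = ((p-1)/p)|u'(r)|^p + u(r)^{q+1}/(q+1)`. -/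
noncomputable def energyF (p q : ℝ) (u : ℝ → ℝ) (r : ℝ) : ℝ :=
  (p - 1) / p * |deriv u r| ^ p + u r ^ (q + 1) / (q + 1)

/-- The Pohozaev function
`P_u(r) = (∫₀ʳ ψ^{n-1}) F_u(r) + (ψ(r)^{n-1}/(q+1)) |u'(r)|^{p-2} u'(r) u(r)`. -/
noncomputable def pohozaevP (n : ℕ) (p q : ℝ) (ψ u : ℝ → ℝ) (r : ℝ) : ℝ :=
  (∫ s in (0:ℝ)..r, ψ s ^ (n - 1)) * energyF p q u r +
    ψ r ^ (n - 1) / (q + 1) * (|deriv u r| ^ (p - 2) * deriv u r * u r)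

/-- `K(r) = ((p-1)/p + 1/(q+1)) ψ(r)^{n-1} - (n-1)(ψ'(r)/ψ(r)) ∫₀ʳ ψ^{n-1}`. -/
noncomputable def Kfun (n : ℕ) (p q : ℝ) (ψ : ℝ → ℝ) (r : ℝ) : ℝ :=
  ((p - 1) / p + 1 / (q + 1)) * ψ r ^ (n - 1) -
    ((n : ℝ) - 1) * (deriv ψ r / ψ r) * ∫ s in (0:ℝ)..r, ψ s ^ (n - 1)

/-- Condition (a): `r^γ ψ'(r)/ψ(r) → ℓ ∈ (0,∞)` for some `γ ∈ [0,1)`. -/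
def CondA (ψ : ℝ → ℝ) : Prop :=
  ∃ γ ℓ : ℝ, 0 ≤ γ ∧ γ < 1 ∧ 0 < ℓ ∧
    Tendsto (fun r : ℝ => r ^ γ * deriv ψ r / ψ r) atTop (nhds ℓ)

/-- Condition (b): `ψ'/ψ → +∞` and `(ψ/ψ') (log(ψ'/ψ))' → 0`. -/
def CondB (ψ : ℝ → ℝ) : Prop :=
  Tendsto (fun r : ℝ => deriv ψ r / ψ r) atTop atTop ∧
    Tendsto (fun r : ℝ => ψ r / deriv ψ r *
      deriv (fun s : ℝ => Real.log (deriv ψ s / ψ s)) r) atTop (nhds 0)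

/-! Write `ρ = -u' / u` and `H = ψ' / ψ`. Convexity of `ψ` gives `1 ≤ n Θ H`, so the Pohozaev
function of `u` is nonincreasing, hence nonpositive; dropping its potential term leaves
`(p - 1) ρ ≤ (n - p) H`, which keeps `ρ` below the equilibrium `(n - 1) H / (p - 1)` of the
unforced Riccati equation for `ρ ^ (p - 1)` by at least `H`. Let now `g` be comparable to `H` and
slowly varying in the time `log ψ`. Integrating the equation bounds the forcing
`u ^ (q + 1 - p) / g ^ p` by a multiple of `(ρ / g) ^ (p - 1)`; so as long as the forcing is not
small, `u` decays at a definite rate, and the forcing tends to `0`. The Riccati equation then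
damps `(ρ / g) ^ (p - 1)` to `0` as well. -/

open Asymptotics Set

theorem le_of_hasDerivAt_nonpos {f f' : ℝ → ℝ} {a b : ℝ} (hab : a ≤ b)
    (hf : ContinuousOn f (Icc a b)) (hf' : ∀ x ∈ Ioo a b, HasDerivAt f (f' x) x)
    (hle : ∀ x ∈ Ioo a b, f' x ≤ 0) : f b ≤ f a := by
  refine antitoneOn_of_hasDerivWithinAt_nonpos (f' := f') (convex_Icc a b) hf ?_ ?_
    (left_mem_Icc.2 hab) (right_mem_Icc.2 hab) hab
  · rw [interior_Icc]
    exact fun x hx => (hf' x hx).hasDerivWithinAt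
  · rwa [interior_Icc]

theorem frequently_lt_of_deriv_le {f f' φ φ' : ℝ → ℝ} {ε δ : ℝ} (hφ : Tendsto φ atTop atTop)
    (hφ' : ∀ᶠ r in atTop, HasDerivAt φ (φ' r) r) (hf' : ∀ᶠ r in atTop, HasDerivAt f (f' r) r)
    (hδ : 0 < δ) (h : ∀ᶠ r in atTop, ε ≤ f r → f' r ≤ -δ * φ' r) :
    ∃ᶠ r in atTop, f r < ε := by
  intro hge
  obtain ⟨R, hR⟩ := eventually_atTop.1 ((hφ'.and hf').and (h.and hge))
  have hderiv : ∀ r ≥ R, HasDerivAt (fun r => f r + δ * φ r) (f' r + δ * φ' r) r :=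
    fun r hr => (hR r hr).1.2.add ((hR r hr).1.1.const_mul δ)
  have hbound : ∀ r ≥ R, f r + δ * φ r ≤ f R + δ * φ R := fun r hr =>
    le_of_hasDerivAt_nonpos hr (fun x hx => (hderiv x hx.1).continuousAt.continuousWithinAt)
      (fun x hx => hderiv x hx.1.le) fun x hx => by
        linarith [(hR x hx.1.le).2.1 (not_lt.1 (hR x hx.1.le).2.2)]
  obtain ⟨r, hlarge, hr⟩ := ((hφ.const_mul_atTop hδ).eventually_gt_atTop
    (f R + δ * φ R - ε)).and (eventually_ge_atTop R) |>.exists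
  linarith [hbound r hr, not_lt.1 (hR r hr).2.2]

theorem eventually_le_of_deriv_neg {f f' : ℝ → ℝ} {ε : ℝ}
    (hf' : ∀ᶠ r in atTop, HasDerivAt f (f' r) r) (hfreq : ∃ᶠ r in atTop, f r ≤ ε)
    (h : ∀ᶠ r in atTop, f r = ε → f' r < 0) : ∀ᶠ r in atTop, f r ≤ ε := by
  obtain ⟨R, hR⟩ := eventually_atTop.1 (hf'.and h)
  obtain ⟨R₁, hle, hRR₁⟩ := (hfreq.and_eventually (eventually_ge_atTop R)).exists
  filter_upwards [eventually_ge_atTop R₁] with r hr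
  have hmem : ∀ x ∈ Icc R₁ r, R ≤ x := fun x hx => hRR₁.trans hx.1
  exact image_le_of_deriv_right_lt_deriv_boundary'
    (fun x hx => (hR x (hmem x hx)).1.continuousAt.continuousWithinAt)
    (fun x hx => (hR x (hmem x (Ico_subset_Icc_self hx))).1.hasDerivWithinAt) hle
    continuousOn_const (fun x _ => hasDerivWithinAt_const x _ ε)
    (fun x hx => (hR x (hmem x (Ico_subset_Icc_self hx))).2) (right_mem_Icc.2 hr)

-- `φ` plays the role of time.
theorem tendsto_zero_of_deriv_le {f f' φ φ' : ℝ → ℝ} (hφ : Tendsto φ atTop atTop)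
    (hφ' : ∀ᶠ r in atTop, HasDerivAt φ (φ' r) r) (hφ'_pos : ∀ᶠ r in atTop, 0 < φ' r)
    (hf' : ∀ᶠ r in atTop, HasDerivAt f (f' r) r) (hf_nonneg : ∀ᶠ r in atTop, 0 ≤ f r)
    (h : ∀ ε > 0, ∃ δ > 0, ∀ᶠ r in atTop, ε ≤ f r → f' r ≤ -δ * φ' r) :
    Tendsto f atTop (𝓝 0) := by
  refine tendsto_order.2 ⟨fun b hb => hf_nonneg.mono fun r hr => hb.trans_le hr, fun b hb => ?_⟩
  obtain ⟨δ, hδ, hdec⟩ := h (b / 2) (half_pos hb)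
  have hfreq := (frequently_lt_of_deriv_le hφ hφ' hf' hδ hdec).mono fun r hr => hr.le
  have hneg : ∀ᶠ r in atTop, f r = b / 2 → f' r < 0 := by
    filter_upwards [hdec, hφ'_pos] with r hr hpos heq
    linarith [hr heq.ge, mul_pos hδ hpos]
  filter_upwards [eventually_le_of_deriv_neg hf' hfreq hneg] with r hr
  linarith

theorem hasDerivAt_div_rpow {f g : ℝ → ℝ} {f' b r : ℝ} (hf : HasDerivAt f f' r)
    (hg : DifferentiableAt ℝ g r) (hpos : 0 < g r) :
    HasDerivAt (fun s => f s / g s ^ b) ((f' - b * logDeriv g r * f r) / g r ^ b) r := by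
  have hgb := rpow_pos_of_pos hpos b
  refine (hf.div (hg.hasDerivAt.rpow_const (p := b) (Or.inl hpos.ne')) hgb.ne').congr_deriv ?_
  rw [logDeriv_apply, rpow_sub_one hpos.ne']
  field_simp

theorem hasDerivAt_rpow_div_rpow {f g : ℝ → ℝ} {a b r : ℝ} (hf : DifferentiableAt ℝ f r)
    (hg : DifferentiableAt ℝ g r) (hf_pos : 0 < f r) (hg_pos : 0 < g r) :
    HasDerivAt (fun s => f s ^ a / g s ^ b)
      (f r ^ a / g r ^ b * (a * logDeriv f r - b * logDeriv g r)) r := by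
  refine (hasDerivAt_div_rpow (hf.hasDerivAt.rpow_const (Or.inl hf_pos.ne')) hg
    hg_pos).congr_deriv ?_
  rw [rpow_sub_one hf_pos.ne', logDeriv_apply f]
  ring

theorem rpow_sub_one_mul {x : ℝ} (hx : 0 < x) (y : ℝ) : x ^ (y - 1) * x = x ^ y := by
  rw [← rpow_add_one hx.ne', sub_add_cancel]

theorem rpow_add_one_sub {x : ℝ} (hx : 0 < x) (y z : ℝ) :
    x ^ (y + 1 - z) = x ^ y / x ^ (z - 1) := by
  rw [← rpow_sub hx, sub_sub_eq_add_sub]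

theorem continuous_abs_rpow_mul_self {p : ℝ} (hp : 1 < p) :
    Continuous fun x : ℝ => |x| ^ (p - 2) * x := by
  have hderiv : deriv (fun x : ℝ => ‖x‖ ^ p) = fun x => p * (|x| ^ (p - 2) * x) :=
    funext fun x => by simpa [mul_assoc] using (hasDerivAt_abs_rpow x hp).deriv
  have hcont := (contDiff_norm_rpow (E := ℝ) hp).continuous_deriv le_rfl
  rw [hderiv] at hcont
  simpa [inv_mul_cancel_left₀ (by linarith : p ≠ 0)] using hcont.const_mul p⁻¹

theorem abs_rpow_mul_self_of_neg {x : ℝ} (hx : x < 0) (p : ℝ) :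
    |x| ^ (p - 2) * x = -|x| ^ (p - 1) := by
  have hpow : |x| ^ (p - 2) * |x| = |x| ^ (p - 1) := by
    rw [← rpow_sub_one_mul (abs_pos.2 hx.ne) (p - 1), sub_sub, one_add_one_eq_two]
  rw [← hpow, ← mul_neg, abs_of_neg hx, neg_neg]

theorem ofReal_lt_of_mem_Icc {r s : ℝ} {T : ℝ≥0∞} (hrT : ENNReal.ofReal r < T)
    (hs : s ∈ Icc 0 r) : ENNReal.ofReal s < T :=
  (ENNReal.ofReal_le_ofReal hs.2).trans_lt hrT

theorem eventually_pos_and_ofReal_lt {r : ℝ} {T : ℝ≥0∞} (hr : 0 < r)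
    (hrT : ENNReal.ofReal r < T) : ∀ᶠ s in 𝓝 r, 0 < s ∧ ENNReal.ofReal s < T :=
  (eventually_gt_nhds hr).and
    (ENNReal.continuous_ofReal.continuousAt.eventually (Iio_mem_nhds hrT))

/-- The volume of the geodesic ball of radius `r` in the model of dimension `n`, up to the measure
of the unit sphere; `Theta` is its quotient by the surface `ψ ^ (n - 1)`. -/
noncomputable def modelVolume (n : ℕ) (ψ : ℝ → ℝ) (r : ℝ) : ℝ :=
  ∫ s in (0 : ℝ)..r, ψ s ^ (n - 1)

namespace IsCHModel

variable {ψ : ℝ → ℝ} {n : ℕ} {r : ℝ}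

theorem pos (hψ : IsCHModel ψ) (hr : 0 < r) : 0 < ψ r := hψ.2.2.2.2 r hr

theorem differentiable (hψ : IsCHModel ψ) : Differentiable ℝ ψ :=
  hψ.1.differentiable (by simp)

theorem differentiable_deriv (hψ : IsCHModel ψ) : Differentiable ℝ (deriv ψ) :=
  (contDiff_infty_iff_deriv.1 hψ.1).2.differentiable (by simp)

theorem one_le_deriv (hψ : IsCHModel ψ) (hr : 0 ≤ r) : 1 ≤ deriv ψ r := by
  have hmono : MonotoneOn (deriv ψ) (Ici 0) :=
    monotoneOn_of_deriv_nonneg (convex_Ici 0) hψ.differentiable_deriv.continuous.continuousOn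
      hψ.differentiable_deriv.differentiableOn
      fun x hx => hψ.2.2.2.1 x (interior_subset hx)
  exact hψ.2.2.1.symm.trans_le (hmono self_mem_Ici hr hr)

theorem self_le (hψ : IsCHModel ψ) (hr : 0 ≤ r) : r ≤ ψ r := by
  have hmvt := (convex_Ici (0 : ℝ)).mul_sub_le_image_sub_of_le_deriv
    hψ.differentiable.continuous.continuousOn hψ.differentiable.differentiableOn
    (fun x hx => hψ.one_le_deriv (interior_subset hx)) 0 self_mem_Ici r hr hr
  simpa [hψ.2.1] using hmvt

theorem tendsto_log_atTop (hψ : IsCHModel ψ) : Tendsto (fun r => log (ψ r)) atTop atTop :=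
  Real.tendsto_log_atTop.comp <|
    tendsto_atTop_mono' _ ((eventually_ge_atTop 0).mono fun _ => hψ.self_le) tendsto_id

theorem logDeriv_pos (hψ : IsCHModel ψ) (hr : 0 < r) : 0 < logDeriv ψ r :=
  div_pos (one_pos.trans_le (hψ.one_le_deriv hr.le)) (hψ.pos hr)

theorem hasDerivAt_log (hψ : IsCHModel ψ) (hr : 0 < r) :
    HasDerivAt (fun s => log (ψ s)) (logDeriv ψ r) r :=
  (hψ.differentiable r).hasDerivAt.log (hψ.pos hr).ne'

theorem differentiableAt_logDeriv (hψ : IsCHModel ψ) (hr : 0 < r) :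
    DifferentiableAt ℝ (logDeriv ψ) r :=
  (hψ.differentiable_deriv r).div (hψ.differentiable r) (hψ.pos hr).ne'

theorem hasDerivAt_pow_pred (hψ : IsCHModel ψ) (hn : n ≠ 0) (hr : 0 < r) :
    HasDerivAt (fun s => ψ s ^ (n - 1)) ((n - 1) * logDeriv ψ r * ψ r ^ (n - 1)) r := by
  refine ((hψ.differentiable r).hasDerivAt.pow (n - 1)).congr_deriv ?_
  have hψr := hψ.pos hr
  obtain ⟨m, rfl⟩ := Nat.exists_eq_succ_of_ne_zero hn
  rcases m with _ | m
  · simp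
  · simp only [Nat.succ_eq_add_one, Nat.add_sub_cancel, logDeriv_apply]
    push_cast
    field_simp
    ring

theorem hasDerivAt_modelVolume (hψ : IsCHModel ψ) (n : ℕ) (r : ℝ) :
    HasDerivAt (modelVolume n ψ) (ψ r ^ (n - 1)) r :=
  ((hψ.differentiable.continuous.pow (n - 1)).integral_hasStrictDerivAt 0 r).hasDerivAt

theorem continuous_modelVolume (hψ : IsCHModel ψ) (n : ℕ) : Continuous (modelVolume n ψ) :=
  continuous_iff_continuousAt.2 fun r => (hψ.hasDerivAt_modelVolume n r).continuousAt

theorem modelVolume_pos (hψ : IsCHModel ψ) (n : ℕ) (hr : 0 < r) : 0 < modelVolume n ψ r :=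
  intervalIntegral.intervalIntegral_pos_of_pos_on
    ((hψ.differentiable.continuous.pow _).intervalIntegrable _ _)
    (fun _ hs => pow_pos (hψ.pos hs.1) _) hr

theorem pow_le_mul_modelVolume (hψ : IsCHModel ψ) (hn : n ≠ 0) (hr : 0 ≤ r) :
    ψ r ^ n ≤ n * deriv ψ r * modelVolume n ψ r := by
  have hderiv : ∀ s, HasDerivAt (fun s => ψ s ^ n - n * deriv ψ s * modelVolume n ψ s)
      (-(n * deriv (deriv ψ) s * modelVolume n ψ s)) s := fun s => by
    refine (((hψ.differentiable s).hasDerivAt.pow n).sub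
      (((hψ.differentiable_deriv s).hasDerivAt.const_mul (n : ℝ)).mul
        (hψ.hasDerivAt_modelVolume n s))).congr_deriv ?_
    ring
  have hle := le_of_hasDerivAt_nonpos hr
    (fun s _ => (hderiv s).continuousAt.continuousWithinAt) (fun s _ => hderiv s) fun s hs => by
      have hconvex := hψ.2.2.2.1 s hs.1.le
      have hvol := (hψ.modelVolume_pos n hs.1).le
      exact neg_nonpos.2 (by positivity)
  simpa [hψ.2.1, modelVolume, hn] using hle

-- Equality holds for the Euclidean model `ψ r = r`.
theorem one_le_mul_Theta_mul_logDeriv (hψ : IsCHModel ψ) (hn : n ≠ 0) (hr : 0 < r) :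
    1 ≤ n * (Theta n ψ r * logDeriv ψ r) := by
  have hψr := hψ.pos hr
  have hpow : ψ r ^ n = ψ r ^ (n - 1) * ψ r := (pow_sub_one_mul hn _).symm
  have heq : n * (Theta n ψ r * logDeriv ψ r) =
      n * deriv ψ r * modelVolume n ψ r / ψ r ^ n := by
    rw [hpow, Theta, ← modelVolume, logDeriv_apply]
    field_simp
  rw [heq, one_le_div (by positivity)]
  exact hψ.pow_le_mul_modelVolume hn hr.le

theorem Kfun_nonpos (hψ : IsCHModel ψ) {p q : ℝ} (hn : n ≠ 0) (hp : p ≠ 0)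
    (hpq : (q + 1)⁻¹ ≤ p⁻¹ - (n : ℝ)⁻¹) (hr : 0 < r) : Kfun n p q ψ r ≤ 0 := by
  have hψr := hψ.pos hr
  have hn1 : (1 : ℝ) ≤ n := Nat.one_le_cast.2 (Nat.one_le_iff_ne_zero.2 hn)
  have hcoeff : (p - 1) / p + 1 / (q + 1) ≤ (n - 1) / n := by
    rw [sub_div, sub_div, div_self hp, div_self (by positivity), one_div, one_div, one_div]
    linarith
  have hfactor : Kfun n p q ψ r = ψ r ^ (n - 1) *
      ((p - 1) / p + 1 / (q + 1) - (n - 1) * (Theta n ψ r * logDeriv ψ r)) := by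
    rw [Kfun, Theta, logDeriv_apply]
    field_simp
  have hTheta : (n - 1 : ℝ) / n ≤ (n - 1) * (Theta n ψ r * logDeriv ψ r) := by
    rw [div_le_iff₀ (by positivity), mul_assoc, mul_comm _ (n : ℝ)]
    exact le_mul_of_one_le_right (by linarith) (hψ.one_le_mul_Theta_mul_logDeriv hn hr)
  rw [hfactor]
  exact mul_nonpos_of_nonneg_of_nonpos (by positivity) (by linarith)

end IsCHModel

namespace IsRadialSolution

variable {n : ℕ} {p q α r : ℝ} {ψ u : ℝ → ℝ} {T : ℝ≥0∞}

theorem continuousOn (hu : IsRadialSolution n p q ψ T α u) (hrT : ENNReal.ofReal r < T) :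
    ContinuousOn u (Icc 0 r) := fun s hs =>
  (hu.diff s hs.1 (ofReal_lt_of_mem_Icc hrT hs)).continuousAt.continuousWithinAt

theorem continuousOn_deriv (hu : IsRadialSolution n p q ψ T α u) (hrT : ENNReal.ofReal r < T) :
    ContinuousOn (deriv u) (Icc 0 r) :=
  hu.deriv_cont.mono fun _ hs => ⟨hs.1, ofReal_lt_of_mem_Icc hrT hs⟩

theorem deriv_neg (hu : IsRadialSolution n p q ψ T α u) (hψ : IsCHModel ψ) (hp : 1 < p)
    (hr : 0 < r) (hrT : ENNReal.ofReal r < T) : deriv u r < 0 := by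
  have hcont : ContinuousOn (fun s => ψ s ^ (n - 1) * |deriv u s| ^ (p - 2) * deriv u s)
      (Icc 0 r) := by
    simp only [mul_assoc]
    exact (hψ.differentiable.continuous.continuousOn.pow (n - 1)).mul
      ((continuous_abs_rpow_mul_self hp).comp_continuousOn (hu.continuousOn_deriv hrT))
  have hanti : StrictAntiOn (fun s => ψ s ^ (n - 1) * |deriv u s| ^ (p - 2) * deriv u s)
      (Icc 0 r) := by
    refine strictAntiOn_of_deriv_neg (convex_Icc 0 r) hcont fun s hs => ?_
    rw [interior_Icc] at hs
    have hsT := ofReal_lt_of_mem_Icc hrT (Ioo_subset_Icc_self hs)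
    rw [(hu.eqn s hs.1 hsT).deriv, neg_lt_zero]
    exact mul_pos (pow_pos (hψ.pos hs.1) _) (rpow_pos_of_pos (hu.pos s hs.1.le hsT) _)
  have hflux := hanti (left_mem_Icc.2 hr.le) (right_mem_Icc.2 hr.le) hr
  have hψr := hψ.pos hr
  simp only [hu.deriv_init, mul_zero] at hflux
  exact neg_of_mul_neg_right hflux (by positivity)

theorem hasDerivAt_flux (hu : IsRadialSolution n p q ψ T α u) (hψ : IsCHModel ψ) (hp : 1 < p)
    (hr : 0 < r) (hrT : ENNReal.ofReal r < T) :
    HasDerivAt (fun s => ψ s ^ (n - 1) * |deriv u s| ^ (p - 1)) (ψ r ^ (n - 1) * u r ^ q) r := by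
  refine ((hu.eqn r hr hrT).neg.congr_of_eventuallyEq ?_).congr_deriv (neg_neg _)
  filter_upwards [eventually_pos_and_ofReal_lt hr hrT] with s hs
  rw [Pi.neg_apply, mul_assoc, abs_rpow_mul_self_of_neg (hu.deriv_neg hψ hp hs.1 hs.2)]
  ring

theorem hasDerivAt_abs_deriv_rpow_sub_one (hu : IsRadialSolution n p q ψ T α u)
    (hψ : IsCHModel ψ) (hn : n ≠ 0) (hp : 1 < p) (hr : 0 < r) (hrT : ENNReal.ofReal r < T) :
    HasDerivAt (fun s => |deriv u s| ^ (p - 1))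
      (u r ^ q - (n - 1) * logDeriv ψ r * |deriv u r| ^ (p - 1)) r := by
  have hψr := hψ.pos hr
  refine (((hu.hasDerivAt_flux hψ hp hr hrT).div (hψ.hasDerivAt_pow_pred hn hr)
    (pow_pos hψr _).ne').congr_of_eventuallyEq ?_).congr_deriv ?_
  · filter_upwards [eventually_gt_nhds hr] with s hs
    exact (mul_div_cancel_left₀ _ (pow_pos (hψ.pos hs) _).ne').symm
  · field_simp

theorem hasDerivAt_abs_deriv_rpow (hu : IsRadialSolution n p q ψ T α u) (hψ : IsCHModel ψ)
    (hn : n ≠ 0) (hp : 1 < p) (hr : 0 < r) (hrT : ENNReal.ofReal r < T) :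
    HasDerivAt (fun s => |deriv u s| ^ p)
      (p / (p - 1) * (|deriv u r| * u r ^ q - (n - 1) * logDeriv ψ r * |deriv u r| ^ p)) r := by
  have hp1 : 0 < p - 1 := sub_pos.2 hp
  have hslope : 0 < |deriv u r| := abs_pos.2 (hu.deriv_neg hψ hp hr hrT).ne
  have hpow : ∀ x : ℝ, 0 ≤ x → (x ^ (p - 1)) ^ (p / (p - 1)) = x ^ p := fun x hx => by
    rw [← rpow_mul hx, mul_div_cancel₀ _ hp1.ne']
  have hpow_pred : (|deriv u r| ^ (p - 1)) ^ (p / (p - 1) - 1) = |deriv u r| := by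
    rw [← rpow_mul hslope.le, mul_sub, mul_div_cancel₀ _ hp1.ne', mul_one, sub_sub_cancel, rpow_one]
  refine (((hu.hasDerivAt_abs_deriv_rpow_sub_one hψ hn hp hr hrT).rpow_const
    (Or.inl (rpow_pos_of_pos hslope _).ne')).congr_of_eventuallyEq
      (.of_forall fun s => (hpow _ (abs_nonneg (deriv u s))).symm)).congr_deriv ?_
  rw [hpow_pred, ← rpow_sub_one_mul hslope p]
  ring

theorem hasDerivAt_energyF (hu : IsRadialSolution n p q ψ T α u) (hψ : IsCHModel ψ)
    (hn : n ≠ 0) (hp : 1 < p) (hq : q + 1 ≠ 0) (hr : 0 < r) (hrT : ENNReal.ofReal r < T) :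
    HasDerivAt (energyF p q u) (-((n - 1) * logDeriv ψ r * |deriv u r| ^ p)) r := by
  have hp1 : 0 < p - 1 := sub_pos.2 hp
  have hur := hu.pos r hr.le hrT
  refine (((hu.hasDerivAt_abs_deriv_rpow hψ hn hp hr hrT).const_mul ((p - 1) / p)).add
    (((hu.diff r hr.le hrT).hasDerivAt.rpow_const (p := q + 1)
      (Or.inl hur.ne')).div_const (q + 1))).congr_deriv ?_
  rw [add_sub_cancel_right, abs_of_neg (hu.deriv_neg hψ hp hr hrT)]
  field_simp
  ring

theorem hasDerivAt_pohozaevP (hu : IsRadialSolution n p q ψ T α u) (hψ : IsCHModel ψ)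
    (hn : n ≠ 0) (hp : 1 < p) (hq : q + 1 ≠ 0) (hr : 0 < r) (hrT : ENNReal.ofReal r < T) :
    HasDerivAt (pohozaevP n p q ψ u) (Kfun n p q ψ r * |deriv u r| ^ p) r := by
  have hur := hu.pos r hr.le hrT
  have hslope : 0 < |deriv u r| := abs_pos.2 (hu.deriv_neg hψ hp hr hrT).ne
  have hflux_mul := ((hu.eqn r hr hrT).mul (hu.diff r hr.le hrT).hasDerivAt).div_const (q + 1)
  refine ((((hψ.hasDerivAt_modelVolume n r).mul (hu.hasDerivAt_energyF hψ hn hp hq hr hrT)).add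
    hflux_mul).congr_of_eventuallyEq (.of_forall fun s => ?_)).congr_deriv ?_
  · simp only [pohozaevP, modelVolume, Pi.add_apply, Pi.mul_apply]
    ring
  · have hsplit : |deriv u r| ^ p = |deriv u r| ^ (p - 2) * deriv u r * deriv u r := by
      rw [mul_assoc, ← sq, ← sq_abs, ← rpow_add_natCast hslope.ne']
      simp
    rw [Kfun, energyF, ← modelVolume, ← logDeriv_apply, hsplit, rpow_add_one hur.ne']
    ring

theorem pohozaevP_nonpos (hu : IsRadialSolution n p q ψ T α u) (hψ : IsCHModel ψ) (hn : n ≠ 0)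
    (hp : 1 < p) (hq : 0 < q + 1) (hpq : (q + 1)⁻¹ ≤ p⁻¹ - (n : ℝ)⁻¹) (hr : 0 ≤ r)
    (hrT : ENNReal.ofReal r < T) : pohozaevP n p q ψ u r ≤ 0 := by
  have hp0 : 0 < p := by linarith
  have hu_cont := hu.continuousOn hrT
  have hu'_cont := hu.continuousOn_deriv hrT
  have henergy_cont : ContinuousOn (energyF p q u) (Icc 0 r) :=
    ((hu'_cont.abs.rpow_const fun _ _ => Or.inr hp0.le).const_mul _).add
      ((hu_cont.rpow_const fun _ _ => Or.inr hq.le).div_const _)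
  have hcont : ContinuousOn (pohozaevP n p q ψ u) (Icc 0 r) :=
    ((hψ.continuous_modelVolume n).continuousOn.mul henergy_cont).add
      (((hψ.differentiable.continuous.continuousOn.pow _).div_const _).mul
        (((continuous_abs_rpow_mul_self hp).comp_continuousOn hu'_cont).mul hu_cont))
  have hle := le_of_hasDerivAt_nonpos hr hcont
    (fun s hs => hu.hasDerivAt_pohozaevP hψ hn hp hq.ne' hs.1
      (ofReal_lt_of_mem_Icc hrT (Ioo_subset_Icc_self hs)))
    fun s hs => mul_nonpos_of_nonpos_of_nonneg (hψ.Kfun_nonpos hn hp0.ne' hpq hs.1)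
      (rpow_nonneg (abs_nonneg _) _)
  have hzero : pohozaevP n p q ψ u 0 = 0 := by simp [pohozaevP, hu.deriv_init]
  exact hle.trans_eq hzero

theorem neg_logDeriv_eq (hu : IsRadialSolution n p q ψ T α u) (hψ : IsCHModel ψ) (hp : 1 < p)
    (hr : 0 < r) (hrT : ENNReal.ofReal r < T) : -logDeriv u r = |deriv u r| / u r := by
  rw [abs_of_neg (hu.deriv_neg hψ hp hr hrT), neg_div, logDeriv_apply]

theorem neg_logDeriv_pos (hu : IsRadialSolution n p q ψ T α u) (hψ : IsCHModel ψ) (hp : 1 < p)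
    (hr : 0 < r) (hrT : ENNReal.ofReal r < T) : 0 < -logDeriv u r := by
  rw [hu.neg_logDeriv_eq hψ hp hr hrT]
  exact div_pos (abs_pos.2 (hu.deriv_neg hψ hp hr hrT).ne) (hu.pos r hr.le hrT)

theorem Theta_mul_neg_logDeriv_le (hu : IsRadialSolution n p q ψ T α u) (hψ : IsCHModel ψ)
    (hn : n ≠ 0) (hp : 1 < p) (hq : 0 < q + 1) (hpq : (q + 1)⁻¹ ≤ p⁻¹ - (n : ℝ)⁻¹) (hr : 0 < r)
    (hrT : ENNReal.ofReal r < T) :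
    Theta n ψ r * ((p - 1) * -logDeriv u r) ≤ p * (q + 1)⁻¹ := by
  have hψr := hψ.pos hr
  have hur := hu.pos r hr.le hrT
  have hvol := hψ.modelVolume_pos n hr
  have hslope : 0 < |deriv u r| := abs_pos.2 (hu.deriv_neg hψ hp hr hrT).ne
  have hkinetic : modelVolume n ψ r * ((p - 1) / p * |deriv u r| ^ p) ≤
      ψ r ^ (n - 1) / (q + 1) * (|deriv u r| ^ (p - 1) * u r) := by
    have hpoho := hu.pohozaevP_nonpos hψ hn hp hq hpq hr.le hrT
    have hpotential : 0 ≤ modelVolume n ψ r * (u r ^ (q + 1) / (q + 1)) := by positivity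
    rw [pohozaevP, energyF, ← modelVolume,
      abs_rpow_mul_self_of_neg (hu.deriv_neg hψ hp hr hrT)] at hpoho
    linarith
  calc Theta n ψ r * ((p - 1) * -logDeriv u r)
      = modelVolume n ψ r * ((p - 1) / p * |deriv u r| ^ p) *
          (p / (ψ r ^ (n - 1) * |deriv u r| ^ (p - 1) * u r)) := by
        rw [hu.neg_logDeriv_eq hψ hp hr hrT, ← rpow_sub_one_mul hslope p, Theta, ← modelVolume]
        field_simp
    _ ≤ ψ r ^ (n - 1) / (q + 1) * (|deriv u r| ^ (p - 1) * u r) *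
          (p / (ψ r ^ (n - 1) * |deriv u r| ^ (p - 1) * u r)) := by gcongr
    _ = p * (q + 1)⁻¹ := by field_simp

theorem neg_logDeriv_le (hu : IsRadialSolution n p q ψ T α u) (hψ : IsCHModel ψ) (hn : n ≠ 0)
    (hp : 1 < p) (hq : 0 < q + 1) (hpq : (q + 1)⁻¹ ≤ p⁻¹ - (n : ℝ)⁻¹) (hr : 0 < r)
    (hrT : ENNReal.ofReal r < T) :
    (p - 1) * -logDeriv u r ≤ (n - p) * logDeriv ψ r := by
  have hH := hψ.logDeriv_pos hr
  have hrate : 0 ≤ (p - 1) * -logDeriv u r :=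
    mul_nonneg (sub_nonneg.2 hp.le) (hu.neg_logDeriv_pos hψ hp hr hrT).le
  calc (p - 1) * -logDeriv u r
      ≤ n * (Theta n ψ r * logDeriv ψ r) * ((p - 1) * -logDeriv u r) :=
        le_mul_of_one_le_left hrate (hψ.one_le_mul_Theta_mul_logDeriv hn hr)
    _ = n * logDeriv ψ r * (Theta n ψ r * ((p - 1) * -logDeriv u r)) := by ring
    _ ≤ n * logDeriv ψ r * (p * (q + 1)⁻¹) := by
        gcongr n * logDeriv ψ r * ?_
        exact hu.Theta_mul_neg_logDeriv_le hψ hn hp hq hpq hr hrT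
    _ ≤ n * logDeriv ψ r * (p * (p⁻¹ - (n : ℝ)⁻¹)) := by gcongr
    _ = (n - p) * logDeriv ψ r := by field_simp

theorem Theta_mul_rpow_le (hu : IsRadialSolution n p q ψ T α u) (hψ : IsCHModel ψ) (hp : 1 < p)
    (hq : 0 ≤ q) (hr : 0 < r) (hrT : ENNReal.ofReal r < T) :
    Theta n ψ r * u r ^ q ≤ |deriv u r| ^ (p - 1) := by
  have hψr := hψ.pos hr
  have hderiv : ∀ s ∈ Ioo 0 r, HasDerivAt
      (fun s => modelVolume n ψ s * u s ^ q - ψ s ^ (n - 1) * |deriv u s| ^ (p - 1))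
      (modelVolume n ψ s * (deriv u s * q * u s ^ (q - 1))) s := fun s hs => by
    have hsT := ofReal_lt_of_mem_Icc hrT (Ioo_subset_Icc_self hs)
    refine (((hψ.hasDerivAt_modelVolume n s).mul ((hu.diff s hs.1.le hsT).hasDerivAt.rpow_const
      (Or.inl (hu.pos s hs.1.le hsT).ne'))).sub
        (hu.hasDerivAt_flux hψ hp hs.1 hsT)).congr_deriv ?_
    ring
  have hcont : ContinuousOn
      (fun s => modelVolume n ψ s * u s ^ q - ψ s ^ (n - 1) * |deriv u s| ^ (p - 1))
      (Icc 0 r) :=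
    ((hψ.continuous_modelVolume n).continuousOn.mul
      ((hu.continuousOn hrT).rpow_const fun _ _ => Or.inr hq)).sub
      ((hψ.differentiable.continuous.continuousOn.pow _).mul
        ((hu.continuousOn_deriv hrT).abs.rpow_const fun _ _ => Or.inr (sub_nonneg.2 hp.le)))
  have hle := le_of_hasDerivAt_nonpos hr.le hcont hderiv fun s hs => by
    have hsT := ofReal_lt_of_mem_Icc hrT (Ioo_subset_Icc_self hs)
    have hu_pow := (rpow_pos_of_pos (hu.pos s hs.1.le hsT) (q - 1)).le
    refine mul_nonpos_of_nonneg_of_nonpos (hψ.modelVolume_pos n hs.1).le ?_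
    rw [mul_assoc]
    exact mul_nonpos_of_nonpos_of_nonneg (hu.deriv_neg hψ hp hs.1 hsT).le (mul_nonneg hq hu_pow)
  have hzero : (fun s => modelVolume n ψ s * u s ^ q - ψ s ^ (n - 1) * |deriv u s| ^ (p - 1)) 0
      = 0 := by
    simp [modelVolume, hu.deriv_init, zero_rpow (sub_pos.2 hp).ne']
  rw [Theta, ← modelVolume, div_mul_eq_mul_div, div_le_iff₀' (by positivity)]
  exact sub_nonpos.1 (hle.trans_eq hzero)

theorem rpow_le_mul_neg_logDeriv_rpow (hu : IsRadialSolution n p q ψ T α u) (hψ : IsCHModel ψ)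
    (hn : n ≠ 0) (hp : 1 < p) (hq : 0 ≤ q) (hr : 0 < r) (hrT : ENNReal.ofReal r < T) :
    u r ^ (q + 1 - p) ≤ n * logDeriv ψ r * (-logDeriv u r) ^ (p - 1) := by
  have hur := hu.pos r hr.le hrT
  have hH := hψ.logDeriv_pos hr
  rw [hu.neg_logDeriv_eq hψ hp hr hrT, div_rpow (abs_nonneg _) hur.le, rpow_add_one_sub hur,
    ← mul_div_assoc]
  gcongr
  calc u r ^ q ≤ n * (Theta n ψ r * logDeriv ψ r) * u r ^ q :=
        le_mul_of_one_le_left (by positivity) (hψ.one_le_mul_Theta_mul_logDeriv hn hr)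
    _ = n * logDeriv ψ r * (Theta n ψ r * u r ^ q) := by ring
    _ ≤ n * logDeriv ψ r * |deriv u r| ^ (p - 1) := by
        gcongr
        exact hu.Theta_mul_rpow_le hψ hp hq hr hrT

theorem hasDerivAt_neg_logDeriv_rpow (hu : IsRadialSolution n p q ψ T α u) (hψ : IsCHModel ψ)
    (hn : n ≠ 0) (hp : 1 < p) (hr : 0 < r) (hrT : ENNReal.ofReal r < T) :
    HasDerivAt (fun s => (-logDeriv u s) ^ (p - 1))
      (u r ^ (q + 1 - p) -
        ((n - 1) * logDeriv ψ r - (p - 1) * -logDeriv u r) * (-logDeriv u r) ^ (p - 1)) r := by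
  have hur := hu.pos r hr.le hrT
  have hdiv : ∀ s, 0 < s → ENNReal.ofReal s < T →
      (-logDeriv u s) ^ (p - 1) = |deriv u s| ^ (p - 1) / u s ^ (p - 1) := fun s hs hsT => by
    rw [hu.neg_logDeriv_eq hψ hp hs hsT, div_rpow (abs_nonneg _) (hu.pos s hs.le hsT).le]
  refine ((hasDerivAt_div_rpow (b := p - 1) (hu.hasDerivAt_abs_deriv_rpow_sub_one hψ hn hp hr hrT)
    (hu.diff r hr.le hrT) hur).congr_of_eventuallyEq ?_).congr_deriv ?_
  · filter_upwards [eventually_pos_and_ofReal_lt hr hrT] with s hs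
    exact hdiv s hs.1 hs.2
  · rw [hdiv r hr hrT, rpow_add_one_sub hur]
    ring

theorem hasDerivAt_neg_logDeriv_rpow_div_rpow (hu : IsRadialSolution n p q ψ T α u)
    (hψ : IsCHModel ψ) (hn : n ≠ 0) (hp : 1 < p) {g : ℝ → ℝ} (hg : DifferentiableAt ℝ g r)
    (hg_pos : 0 < g r) (hr : 0 < r) (hrT : ENNReal.ofReal r < T) :
    HasDerivAt (fun s => (-logDeriv u s) ^ (p - 1) / g s ^ (p - 1))
      (g r * (u r ^ (q + 1 - p) / g r ^ p) -
        ((n - 1) * logDeriv ψ r - (p - 1) * -logDeriv u r + (p - 1) * logDeriv g r) *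
          ((-logDeriv u r) ^ (p - 1) / g r ^ (p - 1))) r := by
  refine (hasDerivAt_div_rpow (b := p - 1) (hu.hasDerivAt_neg_logDeriv_rpow hψ hn hp hr hrT)
    hg hg_pos).congr_deriv ?_
  rw [rpow_sub_one hg_pos.ne']
  field_simp
  ring

end IsRadialSolution


/-- A slowly varying rate for the model `ψ`: a function comparable to `ψ' / ψ` at infinity whose
own logarithmic derivative is negligible against `ψ' / ψ`, so that it varies slowly in the time
variable `log ψ`. It isolates what conditions (a) and (b) have in common. -/
structure IsSlowlyVaryingRate (ψ g : ℝ → ℝ) : Prop where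
  pos : ∀ᶠ r in atTop, 0 < g r
  differentiableAt : ∀ᶠ r in atTop, DifferentiableAt ℝ g r
  logDeriv_isLittleO : logDeriv g =o[atTop] logDeriv ψ
  isTheta : g =Θ[atTop] logDeriv ψ

namespace IsSlowlyVaryingRate

variable {ψ g : ℝ → ℝ}

theorem exists_logDeriv_le (hg : IsSlowlyVaryingRate ψ g) :
    ∃ C > 0, ∀ᶠ r in atTop, logDeriv ψ r ≤ C * g r := by
  obtain ⟨C, hC, hbound⟩ := hg.isTheta.2.exists_pos
  refine ⟨C, hC, ?_⟩
  filter_upwards [hbound.bound, hg.pos] with r hr hgr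
  rw [norm_of_nonneg hgr.le] at hr
  exact (le_norm_self _).trans hr

theorem exists_le_logDeriv (hg : IsSlowlyVaryingRate ψ g) (hψ : IsCHModel ψ) :
    ∃ C > 0, ∀ᶠ r in atTop, g r ≤ C * logDeriv ψ r := by
  obtain ⟨C, hC, hbound⟩ := hg.isTheta.1.exists_pos
  refine ⟨C, hC, ?_⟩
  filter_upwards [hbound.bound, eventually_gt_atTop 0] with r hr hr0
  rw [norm_of_nonneg (hψ.logDeriv_pos hr0).le] at hr
  exact (le_norm_self _).trans hr

theorem eventually_abs_logDeriv_le (hg : IsSlowlyVaryingRate ψ g) (hψ : IsCHModel ψ) {τ : ℝ}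
    (hτ : 0 < τ) : ∀ᶠ r in atTop, |logDeriv g r| ≤ τ * logDeriv ψ r := by
  filter_upwards [hg.logDeriv_isLittleO.def hτ, eventually_gt_atTop 0] with r hr hr0
  rwa [norm_of_nonneg (hψ.logDeriv_pos hr0).le] at hr

end IsSlowlyVaryingRate

theorem CondA.exists_isSlowlyVaryingRate {ψ : ℝ → ℝ} (h : CondA ψ) :
    ∃ γ : ℝ, IsSlowlyVaryingRate ψ fun r => r ^ (-γ) := by
  obtain ⟨γ, ℓ, -, hγ, hℓ, hlim⟩ := h
  have hratio : Tendsto (logDeriv ψ / fun r : ℝ => r ^ (-γ)) atTop (𝓝 ℓ) := by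
    refine hlim.congr' ?_
    filter_upwards [eventually_gt_atTop 0] with r hr
    rw [Pi.div_apply, logDeriv_apply, rpow_neg hr.le, div_inv_eq_mul, mul_div_assoc, mul_comm]
  have hTheta : (fun r : ℝ => r ^ (-γ)) =Θ[atTop] logDeriv ψ :=
    isTheta_of_div_tendsto_nhds_ne_zero hratio hℓ.ne'
  have hlogDeriv : (fun r : ℝ => -γ * r⁻¹) =ᶠ[atTop] logDeriv fun r => r ^ (-γ) := by
    filter_upwards [eventually_gt_atTop 0] with r hr
    rw [logDeriv_apply, Real.deriv_rpow_const, rpow_sub_one hr.ne']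
    field_simp
  have hinv : (fun r : ℝ => r⁻¹) =o[atTop] fun r : ℝ => r ^ (-γ) := by
    refine isLittleO_of_tendsto' ?_ ((tendsto_rpow_neg_atTop (sub_pos.2 hγ)).congr' ?_)
    · filter_upwards [eventually_gt_atTop 0] with r hr hzero
      exact absurd hzero (rpow_pos_of_pos hr _).ne'
    · filter_upwards [eventually_gt_atTop 0] with r hr
      rw [← rpow_neg_one, ← rpow_sub hr]
      ring_nf
  exact ⟨γ,
    { pos := (eventually_gt_atTop 0).mono fun r hr => rpow_pos_of_pos hr _
      differentiableAt := (eventually_gt_atTop 0).mono fun r hr =>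
        differentiableAt_rpow_const_of_ne _ hr.ne'
      logDeriv_isLittleO :=
        ((hinv.const_mul_left (-γ)).congr' hlogDeriv .rfl).trans_isTheta hTheta
      isTheta := hTheta }⟩

theorem CondB.isSlowlyVaryingRate_logDeriv {ψ : ℝ → ℝ} (h : CondB ψ) (hψ : IsCHModel ψ) :
    IsSlowlyVaryingRate ψ (logDeriv ψ) where
  pos := (eventually_gt_atTop 0).mono fun _ => hψ.logDeriv_pos
  differentiableAt := (eventually_gt_atTop 0).mono fun _ => hψ.differentiableAt_logDeriv
  logDeriv_isLittleO := by
    refine isLittleO_of_tendsto' ?_ (h.2.congr' ?_)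
    · filter_upwards [eventually_gt_atTop 0] with r hr hzero
      exact absurd hzero (hψ.logDeriv_pos hr).ne'
    · filter_upwards [eventually_gt_atTop 0] with r hr
      have hlog := Real.deriv_log_comp_eq_logDeriv (hψ.differentiableAt_logDeriv hr)
        (hψ.logDeriv_pos hr).ne'
      rw [← hlog, logDeriv_apply, div_div_eq_mul_div, mul_comm (ψ r / _), mul_div_assoc]
      rfl
  isTheta := isTheta_refl _ _

theorem IsCHModel.exists_isSlowlyVaryingRate {ψ : ℝ → ℝ} (hψ : IsCHModel ψ)
    (h : CondA ψ ∨ CondB ψ) : ∃ g, IsSlowlyVaryingRate ψ g :=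
  h.elim (fun hA => let ⟨_, hg⟩ := hA.exists_isSlowlyVaryingRate; ⟨_, hg⟩)
    fun hB => ⟨_, hB.isSlowlyVaryingRate_logDeriv hψ⟩

namespace IsRadialSolution

variable {n : ℕ} {p q α ε : ℝ} {ψ u g : ℝ → ℝ}

theorem exists_mul_logDeriv_le_neg_logDeriv (hu : IsRadialSolution n p q ψ ⊤ α u)
    (hψ : IsCHModel ψ) (hg : IsSlowlyVaryingRate ψ g) (hn : n ≠ 0) (hp : 1 < p) (hq : 0 ≤ q)
    (hε : 0 < ε) :
    ∃ κ > 0, ∀ᶠ r in atTop, ε ≤ u r ^ (q + 1 - p) / g r ^ p →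
      κ * logDeriv ψ r ≤ -logDeriv u r := by
  have hp1 : 0 < p - 1 := sub_pos.2 hp
  obtain ⟨C, hC, hHg⟩ := hg.exists_logDeriv_le
  have hcoeff : 0 < ε / (n * C ^ p) := by positivity
  refine ⟨(ε / (n * C ^ p)) ^ (p - 1)⁻¹, by positivity, ?_⟩
  filter_upwards [hHg, hg.pos, eventually_gt_atTop 0] with r hHr hgr hr hge
  have hH := hψ.logDeriv_pos hr
  have hρ := hu.neg_logDeriv_pos hψ hp hr ENNReal.ofReal_lt_top
  rw [← rpow_le_rpow_iff (by positivity) hρ.le hp1, mul_rpow (by positivity) hH.le,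
    rpow_inv_rpow hcoeff.le hp1.ne', div_mul_eq_mul_div, div_le_iff₀' (by positivity)]
  refine le_of_mul_le_mul_right ?_ hH
  calc ε * logDeriv ψ r ^ (p - 1) * logDeriv ψ r = ε * logDeriv ψ r ^ p := by
        rw [mul_assoc, rpow_sub_one_mul hH]
    _ ≤ ε * (C * g r) ^ p := by gcongr
    _ = C ^ p * (ε * g r ^ p) := by
        rw [mul_rpow hC.le hgr.le]
        ring
    _ ≤ C ^ p * u r ^ (q + 1 - p) := by
        gcongr
        exact (le_div_iff₀ (by positivity)).1 hge
    _ ≤ C ^ p * (n * logDeriv ψ r * (-logDeriv u r) ^ (p - 1)) := by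
        gcongr
        exact hu.rpow_le_mul_neg_logDeriv_rpow hψ hn hp hq hr ENNReal.ofReal_lt_top
    _ = n * C ^ p * (-logDeriv u r) ^ (p - 1) * logDeriv ψ r := by ring

theorem tendsto_rpow_div_rpow_zero (hu : IsRadialSolution n p q ψ ⊤ α u) (hψ : IsCHModel ψ)
    (hg : IsSlowlyVaryingRate ψ g) (hn : n ≠ 0) (hp : 1 < p) (hpq : p < q + 1) :
    Tendsto (fun r => u r ^ (q + 1 - p) / g r ^ p) atTop (𝓝 0) := by
  have hσ : 0 < q + 1 - p := sub_pos.2 hpq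
  refine tendsto_zero_of_deriv_le hψ.tendsto_log_atTop
    ((eventually_gt_atTop 0).mono fun r => hψ.hasDerivAt_log)
    ((eventually_gt_atTop 0).mono fun r => hψ.logDeriv_pos)
    (f' := fun r => u r ^ (q + 1 - p) / g r ^ p *
      ((q + 1 - p) * logDeriv u r - p * logDeriv g r)) ?_ ?_ fun ε hε => ?_
  · filter_upwards [hg.pos, hg.differentiableAt, eventually_ge_atTop 0] with r hgr hg' hr
    exact hasDerivAt_rpow_div_rpow (hu.diff r hr ENNReal.ofReal_lt_top) hg'
      (hu.pos r hr ENNReal.ofReal_lt_top) hgr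
  · filter_upwards [hg.pos, eventually_ge_atTop 0] with r hgr hr
    have hur := hu.pos r hr ENNReal.ofReal_lt_top
    positivity
  · obtain ⟨κ, hκ, hdecay⟩ :=
      hu.exists_mul_logDeriv_le_neg_logDeriv hψ hg hn hp (by linarith) hε
    refine ⟨ε * ((q + 1 - p) * κ / 2), by positivity, ?_⟩
    have hτ : 0 < (q + 1 - p) * κ / (2 * p) := by positivity
    filter_upwards [hdecay, hg.eventually_abs_logDeriv_le hψ hτ, eventually_gt_atTop 0]
      with r hdecay_r hg' hr hge
    have hu_rate : (q + 1 - p) * (κ * logDeriv ψ r) ≤ (q + 1 - p) * -logDeriv u r := by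
      gcongr
      exact hdecay_r hge
    have hg_rate : -(p * logDeriv g r) ≤ (q + 1 - p) * κ / 2 * logDeriv ψ r := by
      calc -(p * logDeriv g r) = p * -logDeriv g r := by ring
        _ ≤ p * ((q + 1 - p) * κ / (2 * p) * logDeriv ψ r) := by
          gcongr
          exact (neg_le_abs _).trans hg'
        _ = (q + 1 - p) * κ / 2 * logDeriv ψ r := by field_simp
    have hH := hψ.logDeriv_pos hr
    have hdamping : (q + 1 - p) * κ / 2 * logDeriv ψ r ≤
        -((q + 1 - p) * logDeriv u r - p * logDeriv g r) := by linarith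
    have hdecrease := mul_le_mul hge hdamping (by positivity) (hε.le.trans hge)
    linarith

theorem eventually_mul_logDeriv_le_damping (hu : IsRadialSolution n p q ψ ⊤ α u)
    (hψ : IsCHModel ψ) (hg : IsSlowlyVaryingRate ψ g) (hn : n ≠ 0) (hp : 1 < p) (hq : 0 < q + 1)
    (hpq : (q + 1)⁻¹ ≤ p⁻¹ - (n : ℝ)⁻¹) :
    ∀ᶠ r in atTop, (p - 1) / 2 * logDeriv ψ r ≤
      (n - 1) * logDeriv ψ r - (p - 1) * -logDeriv u r + (p - 1) * logDeriv g r := by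
  filter_upwards [hg.eventually_abs_logDeriv_le hψ one_half_pos, eventually_gt_atTop 0]
    with r hg' hr
  have hu_rate := hu.neg_logDeriv_le hψ hn hp hq hpq hr ENNReal.ofReal_lt_top
  have hg_rate := mul_le_mul_of_nonneg_left ((neg_le_abs _).trans hg') (sub_nonneg.2 hp.le)
  linarith

theorem tendsto_neg_logDeriv_rpow_div_rpow_zero (hu : IsRadialSolution n p q ψ ⊤ α u)
    (hψ : IsCHModel ψ) (hg : IsSlowlyVaryingRate ψ g) (hn : n ≠ 0) (hp : 1 < p)
    (hq : 0 < q + 1) (hpq : (q + 1)⁻¹ ≤ p⁻¹ - (n : ℝ)⁻¹) :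
    Tendsto (fun r => (-logDeriv u r) ^ (p - 1) / g r ^ (p - 1)) atTop (𝓝 0) := by
  have hlt : p < q + 1 := by
    have hn' : (0 : ℝ) < (n : ℝ)⁻¹ := by positivity
    rw [← inv_lt_inv₀ hq (one_pos.trans hp)]
    linarith
  refine tendsto_zero_of_deriv_le hψ.tendsto_log_atTop
    ((eventually_gt_atTop 0).mono fun r => hψ.hasDerivAt_log)
    ((eventually_gt_atTop 0).mono fun r => hψ.logDeriv_pos)
    (((hg.pos.and hg.differentiableAt).and (eventually_gt_atTop 0)).mono fun r hr =>
      hu.hasDerivAt_neg_logDeriv_rpow_div_rpow hψ hn hp hr.1.2 hr.1.1 hr.2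
        ENNReal.ofReal_lt_top) ?_ fun ε hε => ?_
  · filter_upwards [hg.pos, eventually_gt_atTop 0] with r hgr hr
    have hρ := hu.neg_logDeriv_pos hψ hp hr ENNReal.ofReal_lt_top
    positivity
  · have hp1 : 0 < p - 1 := sub_pos.2 hp
    obtain ⟨C, hC, hgH⟩ := hg.exists_le_logDeriv hψ
    have hlevel : 0 < (p - 1) * ε / (4 * C) := by positivity
    refine ⟨(p - 1) * ε / 4, by positivity, ?_⟩
    filter_upwards [(hu.tendsto_rpow_div_rpow_zero hψ hg hn hp hlt).eventually_le_const hlevel,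
      hu.eventually_mul_logDeriv_le_damping hψ hg hn hp hq hpq, hgH, hg.pos,
      eventually_gt_atTop 0] with r hforcing hdamping hgHr hgr hr hge
    have hH := hψ.logDeriv_pos hr
    have hur := hu.pos r hr.le ENNReal.ofReal_lt_top
    have hsource : g r * (u r ^ (q + 1 - p) / g r ^ p) ≤ (p - 1) * ε / 4 * logDeriv ψ r := by
      calc g r * (u r ^ (q + 1 - p) / g r ^ p)
          ≤ C * logDeriv ψ r * ((p - 1) * ε / (4 * C)) := by gcongr
        _ = (p - 1) * ε / 4 * logDeriv ψ r := by field_simp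
    have hdecay := mul_le_mul hdamping hge hε.le
      ((by positivity : 0 ≤ (p - 1) / 2 * logDeriv ψ r).trans hdamping)
    linarith

theorem logDeriv_isLittleO (hu : IsRadialSolution n p q ψ ⊤ α u) (hψ : IsCHModel ψ)
    (hg : IsSlowlyVaryingRate ψ g) (hn : n ≠ 0) (hp : 1 < p) (hq : 0 < q + 1)
    (hpq : (q + 1)⁻¹ ≤ p⁻¹ - (n : ℝ)⁻¹) : logDeriv u =o[atTop] logDeriv ψ := by
  have hp1 : 0 < p - 1 := sub_pos.2 hp
  have hratio : Tendsto (fun r => -logDeriv u r / g r) atTop (𝓝 0) := by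
    have hroot := (hu.tendsto_neg_logDeriv_rpow_div_rpow_zero hψ hg hn hp hq hpq).rpow_const
      (p := (p - 1)⁻¹) (Or.inr (by positivity))
    rw [zero_rpow (by positivity)] at hroot
    refine hroot.congr' ?_
    filter_upwards [hg.pos, eventually_gt_atTop 0] with r hgr hr
    have hρ := hu.neg_logDeriv_pos hψ hp hr ENNReal.ofReal_lt_top
    rw [← div_rpow hρ.le hgr.le, rpow_rpow_inv (by positivity) hp1.ne']
  refine ((isLittleO_of_tendsto' ?_ hratio).neg_left.congr_left fun r => neg_neg _).trans_isTheta
    hg.isTheta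
  filter_upwards [hg.pos] with r hgr hzero
  exact absurd hzero hgr.ne'

end IsRadialSolution

theorem inv_add_one_le_inv_sub_inv {n p q : ℝ} (hp : 0 < p) (hpn : p < n)
    (hq : n * p / (n - p) - 1 ≤ q) : (q + 1)⁻¹ ≤ p⁻¹ - n⁻¹ := by
  have hn : 0 < n := hp.trans hpn
  have hnp : 0 < n - p := sub_pos.2 hpn
  calc (q + 1)⁻¹ ≤ (n * p / (n - p))⁻¹ := inv_anti₀ (by positivity) (sub_le_iff_le_add.1 hq)
    _ = p⁻¹ - n⁻¹ := by field_simp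

theorem statement_15_general (n : ℕ) (p q : ℝ) (hp1 : 1 < p) (hpn : p < n)
    (hq : (n : ℝ) * p / ((n : ℝ) - p) - 1 ≤ q) (ψ : ℝ → ℝ) (hψ : IsCHModel ψ) {g : ℝ → ℝ}
    (hg : IsSlowlyVaryingRate ψ g) (α : ℝ) (u : ℝ → ℝ) (hu : IsRadialSolution n p q ψ ⊤ α u) :
    Tendsto (fun r : ℝ => deriv u r / u r * (ψ r / deriv ψ r)) atTop (𝓝 0) := by
  have hp0 : 0 < p := one_pos.trans hp1
  have hn : n ≠ 0 := by
    rintro rfl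
    simp only [Nat.cast_zero] at hpn
    linarith
  have hq0 : 0 < q + 1 :=
    (div_pos (mul_pos (hp0.trans hpn) hp0) (sub_pos.2 hpn)).trans_le (sub_le_iff_le_add.1 hq)
  have hlim := (hu.logDeriv_isLittleO hψ hg hn hp1 hq0
    (inv_add_one_le_inv_sub_inv hp0 hpn hq)).tendsto_div_nhds_zero
  simpa only [logDeriv_apply, div_eq_mul_inv, mul_inv, inv_inv, mul_comm] using hlim

/-- `(u'/u)(ψ/ψ') → 0` at infinity. -/
theorem statement_15 (n : ℕ) (hn : 2 ≤ n) (p q : ℝ) (hp1 : 1 < p) (hpn : p < n)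
    (hq : (n : ℝ) * p / ((n : ℝ) - p) - 1 ≤ q)
    (ψ : ℝ → ℝ) (hψ : IsCHModel ψ)
    (hpc : Tendsto (fun r : ℝ => ∫ s in (0:ℝ)..r, Theta n ψ s ^ (1 / (p - 1)))
      atTop atTop)
    (hcond : CondA ψ ∨ CondB ψ)
    (α : ℝ) (hα : 0 < α)
    (u : ℝ → ℝ) (hu : IsRadialSolution n p q ψ ⊤ α u) :
    Tendsto (fun r : ℝ => deriv u r / u r * (ψ r / deriv ψ r)) atTop (nhds 0) := by
  obtain ⟨g, hg⟩ := hψ.exists_isSlowlyVaryingRate hcond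
  exact statement_15_general n p q hp1 hpn hq ψ hψ hg α u hu
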